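/- Let I be a finite index set, M₁, …, M_N : I → ℝ binary masks (each Mₙ(i) ∈ {0,1}), and G = Σₙ Mₙ. Let φ₀, φ₁, φ₂, … be linear maps with φₜ : ℝ^{t+1} → ℝ, defining at each step t the elementwise linear optimizer fₜ(g⁽ᵗ⁾, …, g⁽⁰⁾)(i) = φₜ(g⁽ᵗ⁾(i), …, g⁽⁰⁾(i)). Fix an arbitrary gradient sequence g⁽⁰⁾, g⁽¹⁾, … : I → ℝ and learning rates λ⁽⁰⁾, λ⁽¹⁾, … ∈ ℝ. Define branch trajectories Wₙ⁽ᵗ⁺¹⁾ = Wₙ⁽ᵗ⁾ − λ⁽ᵗ⁾ · fₜ(Mₙ ⊙ g⁽ᵗ⁾, …, Mₙ ⊙ g⁽⁰⁾) and a merged trajectory Ŵ⁽⁰⁾ = Σₙ Mₙ ⊙ Wₙ⁽⁰⁾, Ŵ⁽ᵗ⁺¹⁾ = Ŵ⁽ᵗ⁾ − λ⁽ᵗ⁾ · fₜ(G ⊙ g⁽ᵗ⁾, …, G ⊙ g⁽⁰⁾). Then for every t ≥ 0, Σₙ Mₙ ⊙ Wₙ⁽ᵗ⁾ = Ŵ⁽ᵗ⁾: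 training the N-branch reparameterization with a linear optimizer is equivalent, at every step, to training the single merged convolution with gradients scaled elementwise by the spatial gradient scaling G. -/

import Mathlib

/-- Training an `N`-branch reparameterization (binary masks `M n`,
branch weights `Wb n t`) with elementwise linear optimizers `fₜ` — given coordinatewise by
linear maps `φ t : ℝ^(t+1) → ℝ` applied to the masked gradient history — is equivalent,
at every step `t`, to training the single merged convolution `Ŵ` with gradients scaled
elementwise by the spatial gradient scaling `G = ∑ n, M n`:
`∑ n, M n ⊙ Wb n t = Ŵ t` for all `t`. -/
theorem sgs_trajectory_equivalence
    {I : Type*} [Fintype I] {N : ℕ}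
    (M : Fin N → I → ℝ)
    (hM : ∀ n i, M n i = 0 ∨ M n i = 1)
    (G : I → ℝ) (hG : G = ∑ n, M n)
    (φ : (t : ℕ) → (Fin (t + 1) → ℝ) →ₗ[ℝ] ℝ)
    (g : ℕ → I → ℝ)
    (lam : ℕ → ℝ)
    (Wb : Fin N → ℕ → I → ℝ)
    (hWb : ∀ n t, Wb n (t + 1)
        = Wb n t - lam t • (fun i => φ t (fun j : Fin (t + 1) => (M n * g j) i)))
    (Wmerged : ℕ → I → ℝ)
    (hW0 : Wmerged 0 = ∑ n, M n * Wb n 0)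
    (hWstep : ∀ t, Wmerged (t + 1)
        = Wmerged t - lam t • (fun i => φ t (fun j : Fin (t + 1) => (G * g j) i))) :
    ∀ t, ∑ n, M n * Wb n t = Wmerged t := by
  have key : ∀ (t : ℕ) (c : ℝ) (i : I),
      φ t (fun j : Fin (t + 1) => c * g j i) = c * φ t (fun j : Fin (t + 1) => g j i) := by
    intro t c i
    have h := (φ t).map_smul c (fun j : Fin (t + 1) => g j i)
    exact h
  intro t
  induction t with
  | zero => exact hW0.symm
  | succ t ih =>
    rw [hWstep, ← ih, hG]
    ext i
    simp only [hWb, Finset.sum_apply, Pi.mul_apply, Pi.sub_apply, Pi.smul_apply, smul_eq_mul, key]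
    rw [Finset.sum_mul, Finset.mul_sum, ← Finset.sum_sub_distrib]
    refine Finset.sum_congr rfl fun n _ => ?_
    rcases hM n i with h | h <;> rw [h] <;> ring
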